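/- arXiv:math/0610417 — 2 statements merged into one kernel-verified Lean document; each statement's English description precedes it below -/
import Mathlib

section
/- Functional equation for the denominator of the genus-2 Rankin series: write D(X) = Σ_{i=0}^{16} s_i X^i ∈ K[X]. Then for every i with 0 ≤ i ≤ 8 one has s_{16−i} = (x₀²y₀²x₁x₂y₁y₂)^{8−i}·s_i. (Note x₀²y₀²x₁x₂y₁y₂ is the spherical image of p⁶[p]⊗[p], so this is the functional equation s_{16−i} = (p⁶[p]⊗[p])^{8−i}s_i of Theorem 3.1.) -/
noncomputable section

open PowerSeries

abbrev K : Type := FractionRing (MvPolynomial (Fin 7) ℚ)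

def p : K := algebraMap (MvPolynomial (Fin 7) ℚ) K (MvPolynomial.X 0)
def x₀ : K := algebraMap (MvPolynomial (Fin 7) ℚ) K (MvPolynomial.X 1)
def x₁ : K := algebraMap (MvPolynomial (Fin 7) ℚ) K (MvPolynomial.X 2)
def x₂ : K := algebraMap (MvPolynomial (Fin 7) ℚ) K (MvPolynomial.X 3)
def y₀ : K := algebraMap (MvPolynomial (Fin 7) ℚ) K (MvPolynomial.X 4)
def y₁ : K := algebraMap (MvPolynomial (Fin 7) ℚ) K (MvPolynomial.X 5)
def y₂ : K := algebraMap (MvPolynomial (Fin 7) ℚ) K (MvPolynomial.X 6)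

/-- The four "exponential frequencies" 1, x₁, x₂, x₁x₂ (resp. 1, y₁, y₂, y₁y₂). -/
def uu : Fin 4 → K := ![1, x₁, x₂, x₁*x₂]
def vv : Fin 4 → K := ![1, y₁, y₂, y₁*y₂]

/-- The denominator D(X) = Π_{u,v} (1 − x₀y₀uvX), product of sixteen linear factors. -/
def D : Polynomial K :=
  ∏ i : Fin 4, ∏ j : Fin 4, (1 - Polynomial.C (x₀*y₀*uu i*vv j) * Polynomial.X)

/-- Self-reciprocity of weight `M` and half-degree `n`. -/
def SelfRec (M : K) (n : ℕ) (f : Polynomial K) : Prop :=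
  f.natDegree ≤ 2 * n ∧
    (f.reflect (2 * n)).comp (Polynomial.C M * Polynomial.X) = Polynomial.C (M ^ n) * f

lemma SelfRec.mul {M : K} {m n : ℕ} {f g : Polynomial K} (hf : SelfRec M m f)
    (hg : SelfRec M n g) : SelfRec M (m + n) (f * g) := by
  refine ⟨?_, ?_⟩
  · have h := Polynomial.natDegree_mul_le (p := f) (q := g)
    have h1 := hf.1
    have h2 := hg.1
    omega
  · rw [mul_add, Polynomial.reflect_mul f g hf.1 hg.1, Polynomial.mul_comp, hf.2, hg.2, pow_add,
      Polynomial.C_mul]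
    ring

/-- A single linear factor. -/
def lin (a : K) : Polynomial K := 1 - Polynomial.C a * Polynomial.X

lemma lin_natDegree (a : K) : (lin a).natDegree ≤ 1 := by
  unfold lin
  compute_degree

lemma lin_reflect (a : K) : (lin a).reflect 1 = Polynomial.X - Polynomial.C a := by
  unfold lin
  rw [Polynomial.reflect_sub, Polynomial.reflect_one]
  have h := Polynomial.reflect_C_mul_X_pow 1 1 (c := a)
  simp only [pow_one] at h
  rw [h]
  simp [Polynomial.revAt_le]

lemma selfRec_pair {M : K} (a b : K) (h : a * b = M) : SelfRec M 1 (lin a * lin b) := by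
  refine ⟨?_, ?_⟩
  · have h0 := Polynomial.natDegree_mul_le (p := lin a) (q := lin b)
    have h1 := lin_natDegree a
    have h2 := lin_natDegree b
    omega
  · rw [show 2 * 1 = 1 + 1 from rfl,
      Polynomial.reflect_mul _ _ (lin_natDegree a) (lin_natDegree b), lin_reflect, lin_reflect]
    subst h
    simp only [lin, Polynomial.mul_comp, Polynomial.sub_comp, Polynomial.X_comp,
      Polynomial.C_comp, Polynomial.C_mul, pow_one]
    ring

lemma D_eq : D =
    (lin (x₀*y₀*uu 0*vv 0) * lin (x₀*y₀*uu 3*vv 3)) *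
    (lin (x₀*y₀*uu 0*vv 1) * lin (x₀*y₀*uu 3*vv 2)) *
    (lin (x₀*y₀*uu 0*vv 2) * lin (x₀*y₀*uu 3*vv 1)) *
    (lin (x₀*y₀*uu 0*vv 3) * lin (x₀*y₀*uu 3*vv 0)) *
    (lin (x₀*y₀*uu 1*vv 0) * lin (x₀*y₀*uu 2*vv 3)) *
    (lin (x₀*y₀*uu 1*vv 1) * lin (x₀*y₀*uu 2*vv 2)) *
    (lin (x₀*y₀*uu 1*vv 2) * lin (x₀*y₀*uu 2*vv 1)) *
    (lin (x₀*y₀*uu 1*vv 3) * lin (x₀*y₀*uu 2*vv 0)) := by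
  have h : D = ∏ i : Fin 4, ∏ j : Fin 4, lin (x₀*y₀*uu i*vv j) := rfl
  rw [h]
  simp only [Fin.prod_univ_four]
  ac_rfl

lemma D_selfRec : SelfRec (x₀^2*y₀^2*x₁*x₂*y₁*y₂) 8 D := by
  rw [D_eq]
  refine ((((((((selfRec_pair _ _ ?_).mul (selfRec_pair _ _ ?_)).mul (selfRec_pair _ _ ?_)).mul
    (selfRec_pair _ _ ?_)).mul (selfRec_pair _ _ ?_)).mul (selfRec_pair _ _ ?_)).mul
    (selfRec_pair _ _ ?_)).mul (selfRec_pair _ _ ?_)) <;>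
  · simp [uu, vv]
    ring

lemma var_ne_zero (i : Fin 7) :
    algebraMap (MvPolynomial (Fin 7) ℚ) K (MvPolynomial.X i) ≠ 0 := by
  intro h
  exact MvPolynomial.X_ne_zero i ((IsFractionRing.injective (MvPolynomial (Fin 7) ℚ) K)
    (h.trans (map_zero _).symm))

lemma weight_ne_zero : x₀^2*y₀^2*x₁*x₂*y₁*y₂ ≠ 0 := by
  have h1 : x₀ ≠ 0 := var_ne_zero 1
  have h2 : x₁ ≠ 0 := var_ne_zero 2
  have h3 : x₂ ≠ 0 := var_ne_zero 3
  have h4 : y₀ ≠ 0 := var_ne_zero 4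
  have h5 : y₁ ≠ 0 := var_ne_zero 5
  have h6 : y₂ ≠ 0 := var_ne_zero 6
  simp [h1, h2, h3, h4, h5, h6]

theorem stmt_11 (i : ℕ) (hi : i ≤ 8) :
    D.coeff (16 - i) = (x₀^2*y₀^2*x₁*x₂*y₁*y₂)^(8-i) * D.coeff i := by
  have h := congrArg (fun f => Polynomial.coeff f i) D_selfRec.2
  have hM := weight_ne_zero
  generalize x₀^2*y₀^2*x₁*x₂*y₁*y₂ = M at h hM ⊢
  simp only [Polynomial.comp_C_mul_X_coeff, Polynomial.coeff_reflect, Polynomial.coeff_C_mul] at h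
  rw [Polynomial.revAt_le (by omega)] at h
  have h8 : M ^ 8 = M ^ (8 - i) * M ^ i := by rw [← pow_add]; congr 1; omega
  apply mul_right_cancel₀ (pow_ne_zero i hM)
  rw [show 2 * 8 = 16 from rfl, h8] at h
  rw [h]
  ring

end
end

section
/- The quadratic coefficient of the denominator of the genus-2 Rankin series: the coefficient s₂ of X² in D(X) equals −p(2p(p²+1)²·CC' + 2p(p²+1)·(BC' + CB') + 2p·BB' − (p²+1)·(A²C' + CA'²) − (A²B' + BA'²)). -/
noncomputable section

open PowerSeries

/-- Spherical images of the genus-2 Hecke operators T(p), T₁(p²), [p]₂ in the x-variables. -/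
def A : K := x₀*(1+x₁)*(1+x₂)
def B : K := x₀^2*((x₁^2*x₂ + x₁*x₂^2)*p^2 + x₁*x₂*p^2 - x₁*x₂ + (x₁+x₂)*p^2)/p^3
def Cc : K := x₀^2*x₁*x₂/p^3

/-- The same spherical images in the y-variables. -/
def A' : K := y₀*(1+y₁)*(1+y₂)
def B' : K := y₀^2*((y₁^2*y₂ + y₁*y₂^2)*p^2 + y₁*y₂*p^2 - y₁*y₂ + (y₁+y₂)*p^2)/p^3
def Cc' : K := y₀^2*y₁*y₂/p^3

/-- `P = 1 + b X + c X^2 + O(X^3)`. -/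
def LowCoeffs {F : Type*} [Field F] (P : Polynomial F) (b c : F) : Prop :=
  P.coeff 0 = 1 ∧ P.coeff 1 = b ∧ P.coeff 2 = c

theorem LowCoeffs.mul {F : Type*} [Field F] {P Q : Polynomial F} {b c b' c' : F}
    (hP : LowCoeffs P b c) (hQ : LowCoeffs Q b' c') :
    LowCoeffs (P * Q) (b + b') (c + b * b' + c') := by
  obtain ⟨h0, h1, h2⟩ := hP
  obtain ⟨k0, k1, k2⟩ := hQ
  refine ⟨?_, ?_, ?_⟩
  · simp [Polynomial.mul_coeff_zero, h0, k0]
  · rw [Polynomial.mul_coeff_one, h0, h1, k0, k1]; ring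
  · rw [Polynomial.coeff_mul, Finset.Nat.sum_antidiagonal_eq_sum_range_succ_mk]
    simp [Finset.sum_range_succ, h0, h1, h2, k0, k1, k2]
    ring

theorem lowCoeffs_linear {F : Type*} [Field F] (a : F) :
    LowCoeffs (1 - Polynomial.C a * Polynomial.X) (-a) 0 := by
  refine ⟨?_, ?_, ?_⟩ <;> simp [Polynomial.coeff_one, Polynomial.coeff_X]

/-- The product over the second index. -/
theorem lowCoeffs_inner {F : Type*} [Field F] (t y z : F) (f : Fin 4 → F)
    (hf : f = ![1, y, z, y * z]) :
    LowCoeffs (∏ j : Fin 4, (1 - Polynomial.C (t * f j) * Polynomial.X))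
      (-(t * ((1 + y) * (1 + z)))) (t ^ 2 * (y + z + 2 * (y * z) + y ^ 2 * z + y * z ^ 2)) := by
  subst hf
  have h := (((lowCoeffs_linear (t * 1)).mul (lowCoeffs_linear (t * y))).mul
    (lowCoeffs_linear (t * z))).mul (lowCoeffs_linear (t * (y * z)))
  rw [Fin.prod_univ_four]
  convert h using 1
  · rfl
  · ring
  · ring

theorem p_ne_zero : p ≠ 0 := by
  unfold p
  intro h
  have := (IsFractionRing.injective (MvPolynomial (Fin 7) ℚ) K) (h.trans (map_zero _).symm)
  exact MvPolynomial.X_ne_zero _ this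

/-- The final identity over an arbitrary field. -/
theorem final_identity {F : Type*} [Field F] (q a b c a' b' c' e e' : F)
    (he : e = q * b + q * (q ^ 2 + 1) * c) (he' : e' = q * b' + q * (q ^ 2 + 1) * c') :
    a ^ 2 * e' + e * a' ^ 2 - 2 * (e * e') =
      -(q*(2*q*(q^2+1)^2*(c*c') + 2*q*(q^2+1)*(b*c' + c*b') + 2*q*(b*b')
      - (q^2+1)*(a^2*c' + c*a'^2) - (a^2*b' + b*a'^2))) := by
  subst he he'; ring

theorem e_identity {F : Type*} [Field F] (q s y z : F) (hq : q ≠ 0) :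
    s ^ 2 * (y + z + 2 * (y * z) + y ^ 2 * z + y * z ^ 2) =
      q * (s^2*((y^2*z + y*z^2)*q^2 + y*z*q^2 - y*z + (y+z)*q^2)/q^3)
        + q * (q ^ 2 + 1) * (s^2*y*z/q^3) := by
  field_simp
  ring

theorem coeff_identity {F : Type*} [Field F] (s r x w y z : F) (f g : Fin 4 → F)
    (hf : f = ![1, x, w, x * w]) (hg : g = ![1, y, z, y * z]) :
    (∏ i : Fin 4, ∏ j : Fin 4,
      (1 - Polynomial.C (s * r * f i * g j) * Polynomial.X)).coeff 2 =
      (s * (1 + x) * (1 + w)) ^ 2 * (r ^ 2 * (y + z + 2 * (y * z) + y ^ 2 * z + y * z ^ 2))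
      + (s ^ 2 * (x + w + 2 * (x * w) + x ^ 2 * w + x * w ^ 2)) * (r * (1 + y) * (1 + z)) ^ 2
      - 2 * ((s ^ 2 * (x + w + 2 * (x * w) + x ^ 2 * w + x * w ^ 2)) *
        (r ^ 2 * (y + z + 2 * (y * z) + y ^ 2 * z + y * z ^ 2))) := by
  have hi := fun i => lowCoeffs_inner (s * r * f i) y z g hg
  have h := ((hi 0).mul (hi 1)).mul (hi 2) |>.mul (hi 3)
  rw [Fin.prod_univ_four, h.2.2]
  have f0 : f 0 = 1 := by simp [hf]
  have f1 : f 1 = x := by simp [hf]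
  have f2 : f 2 = w := by simp [hf]
  have f3 : f 3 = x * w := by simp [hf]
  rw [f0, f1, f2, f3]
  ring

theorem stmt_13 :
    D.coeff 2 = -(p*(2*p*(p^2+1)^2*(Cc*Cc') + 2*p*(p^2+1)*(B*Cc' + Cc*B') + 2*p*(B*B')
      - (p^2+1)*(A^2*Cc' + Cc*A'^2) - (A^2*B' + B*A'^2))) := by
  rw [← final_identity p A B Cc A' B' Cc' _ _ (e_identity p x₀ x₁ x₂ p_ne_zero)
    (e_identity p y₀ y₁ y₂ p_ne_zero)]
  exact coeff_identity x₀ y₀ x₁ x₂ y₁ y₂ uu vv rfl rfl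

end
end
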